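/- arXiv:2006.06307 — 3 statements merged into one kernel-verified Lean document; each statement's English description precedes it below -/
import Mathlib

section
/- If a nonempty word w does not avoid abelian |w|-powers cyclically, then for every integer N ≥ 2, the word w does not avoid abelian N-powers cyclically. -/
/-- `u` is an abelian `N`-power of period `m`: a concatenation of `N` nonempty
pairwise abelian-equivalent words of common length `m`. -/
def IsAbelianPower {α : Type*} (N m : ℕ) (u : List α) : Prop :=
  0 < m ∧ ∃ f : Fin N → List α,
    u = (List.ofFn f).flatten ∧ (∀ i, (f i).length = m) ∧ ∀ i j, List.Perm (f i) (f j)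

/-- `u` occurs in the infinite word `w^ω`, i.e. `u` is a factor of `w^k` for some `k`. -/
def OccursCyc {α : Type*} (w u : List α) : Prop :=
  ∃ k : ℕ, u <:+: (List.replicate k w).flatten

/-- `w` avoids abelian `N`-powers cyclically: every abelian `N`-power of period `m`
occurring in `w^ω` satisfies `m ≥ |w|`. -/
def AvoidsAbelianCyc {α : Type*} (N : ℕ) (w : List α) : Prop :=
  ∀ m u, IsAbelianPower N m u → OccursCyc w u → w.length ≤ m

/-!
An abelian `k`-power `u` of period `m` has length `k * m`. If `|w|` divides this length, then
reading `u` inside `w^ω` returns to the same position modulo `|w|`, so all powers of `u` occur in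
`w^ω` as well. They are abelian powers of the same period `m` with arbitrarily many blocks. For
`k = |w|` the divisibility is automatic.
-/

open FreeMonoid (ofList)

section Words

variable {α : Type*} {w u v : List α} {N M k m : ℕ}

theorem ofList_flatten_replicate (k : ℕ) (w : List α) :
    ofList (List.replicate k w).flatten = ofList w ^ k := by
  rw [FreeMonoid.ofList_flatten, List.map_replicate, List.prod_replicate]

theorem freeMonoid_length_pow (w : FreeMonoid α) (n : ℕ) : (w ^ n).length = n * w.length := by
  induction n with
  | zero => rw [pow_zero, FreeMonoid.length_one, zero_mul]
  | succ n ih => rw [pow_succ, FreeMonoid.length_mul, ih, Nat.succ_mul]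

theorem semiconjBy_pow_of_mul_mul_eq_pow {w s u t : FreeMonoid α} {q : ℕ}
    (h : s * u * t = w ^ k) (hlen : u.length = q * w.length) : SemiconjBy s u (w ^ q) := by
  have hword : s * u * (t * w ^ q) = w ^ q * s * (u * t) :=
    calc s * u * (t * w ^ q) = w ^ k * w ^ q := by rw [← mul_assoc, h]
      _ = w ^ q * w ^ k := ((Commute.refl w).pow_pow k q).eq
      _ = w ^ q * s * (u * t) := by simp only [← h, mul_assoc]
  have hprefix_length : (s * u).length = (w ^ q * s).length := by
    rw [FreeMonoid.length_mul, FreeMonoid.length_mul, hlen, freeMonoid_length_pow, add_comm]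
  exact List.append_inj_left hword hprefix_length

namespace OccursCyc

theorem iff_exists_mul_mul_eq_pow :
    OccursCyc w u ↔ ∃ (k : ℕ) (s t : FreeMonoid α), s * ofList u * t = ofList w ^ k := by
  simp only [← ofList_flatten_replicate]
  exact Iff.rfl

theorem of_infix (hu : OccursCyc w u) (hvu : v <:+: u) : OccursCyc w v :=
  let ⟨k, huw⟩ := hu
  ⟨k, hvu.trans huw⟩

theorem flatten_replicate (hu : OccursCyc w u) (hlen : w.length ∣ u.length) (N : ℕ) :
    OccursCyc w (List.replicate N u).flatten := by
  obtain ⟨k, s, t, hsut⟩ := iff_exists_mul_mul_eq_pow.mp hu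
  obtain ⟨q, hq⟩ := hlen
  have hconj : SemiconjBy s (ofList u ^ N) ((ofList w ^ q) ^ N) :=
    (semiconjBy_pow_of_mul_mul_eq_pow hsut (hq.trans (mul_comm ..))).pow_right N
  refine iff_exists_mul_mul_eq_pow.mpr ⟨q * N + k, s, ofList u * t, ?_⟩
  calc s * ofList (List.replicate N u).flatten * (ofList u * t)
      = s * ofList u ^ N * (ofList u * t) := by rw [ofList_flatten_replicate]
    _ = (ofList w ^ q) ^ N * (s * ofList u * t) := by rw [hconj.eq]; simp only [mul_assoc]
    _ = ofList w ^ (q * N + k) := by rw [hsut, ← pow_mul, pow_add]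

end OccursCyc

namespace IsAbelianPower

theorem iff_exists_blocks :
    IsAbelianPower N m u ↔ 0 < m ∧ ∃ L : List (List α), L.length = N ∧ u = L.flatten ∧
      (∀ x ∈ L, x.length = m) ∧ ∀ x ∈ L, ∀ y ∈ L, x.Perm y := by
  refine and_congr_right fun _ => ⟨?_, ?_⟩
  · rintro ⟨f, rfl, hlen, hperm⟩
    exact ⟨List.ofFn f, List.length_ofFn, rfl, by simpa using hlen, by simpa using hperm⟩
  · rintro ⟨L, rfl, rfl, hlen, hperm⟩
    exact ⟨L.get, by rw [List.ofFn_get], fun i => hlen _ (L.get_mem i),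
      fun i j => hperm _ (L.get_mem i) _ (L.get_mem j)⟩

theorem length_eq (hu : IsAbelianPower N m u) : u.length = N * m := by
  obtain ⟨-, L, rfl, rfl, hlen, -⟩ := iff_exists_blocks.mp hu
  rw [List.length_flatten, List.map_congr_left hlen, List.map_const', List.sum_replicate,
    smul_eq_mul]

theorem flatten_replicate (hu : IsAbelianPower k m u) (N : ℕ) :
    IsAbelianPower (N * k) m (List.replicate N u).flatten := by
  obtain ⟨hm, L, rfl, rfl, hlen, hperm⟩ := iff_exists_blocks.mp hu
  have hmem {x : List α} (hx : x ∈ (List.replicate N L).flatten) : x ∈ L := by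
    obtain ⟨L', hL', hx⟩ := List.mem_flatten.mp hx
    rwa [List.eq_of_mem_replicate hL'] at hx
  refine iff_exists_blocks.mpr ⟨hm, (List.replicate N L).flatten, ?_, ?_,
    fun x hx => hlen x (hmem hx), fun x hx y hy => hperm x (hmem hx) y (hmem hy)⟩
  · simp
  · rw [List.flatten_flatten, List.map_replicate]

theorem exists_prefix (hu : IsAbelianPower M m u) (hNM : N ≤ M) :
    ∃ v, v <+: u ∧ IsAbelianPower N m v := by
  obtain ⟨hm, L, rfl, rfl, hlen, hperm⟩ := iff_exists_blocks.mp hu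
  exact ⟨(L.take N).flatten, (L.take_prefix N).flatten, iff_exists_blocks.mpr
    ⟨hm, L.take N, List.length_take_of_le hNM, rfl, fun x hx => hlen x (List.mem_of_mem_take hx),
      fun x hx y hy => hperm x (List.mem_of_mem_take hx) y (List.mem_of_mem_take hy)⟩⟩

theorem exists_occursCyc (hu : IsAbelianPower k m u) (hk : k ≠ 0) (hwu : OccursCyc w u)
    (hdvd : w.length ∣ k * m) (N : ℕ) : ∃ v, IsAbelianPower N m v ∧ OccursCyc w v := by
  obtain ⟨v, hv_prefix, hv⟩ :=
    (hu.flatten_replicate N).exists_prefix (Nat.le_mul_of_pos_right N (Nat.pos_of_ne_zero hk))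
  have hpow : OccursCyc w (List.replicate N u).flatten :=
    hwu.flatten_replicate (hu.length_eq ▸ hdvd) N
  exact ⟨v, hv, hpow.of_infix hv_prefix.isInfix⟩

end IsAbelianPower

theorem not_avoid_length_power_implies_not_avoid_any_general (hk : k ≠ 0)
    (hu : IsAbelianPower k m u) (hwu : OccursCyc w u) (hdvd : w.length ∣ k * m)
    (hm : m < w.length) (N : ℕ) : ¬ AvoidsAbelianCyc N w := by
  intro havoid
  obtain ⟨v, hv, hwv⟩ := hu.exists_occursCyc hk hwu hdvd N
  exact hm.not_ge (havoid m v hv hwv)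

end Words

theorem not_avoid_length_power_implies_not_avoid_any {α : Type*} (w : List α)
    (hw : w ≠ []) (h : ¬ AvoidsAbelianCyc w.length w) :
    ∀ N : ℕ, 2 ≤ N → ¬ AvoidsAbelianCyc N w := by
  intro N _
  simp only [AvoidsAbelianCyc, not_forall, not_le] at h
  obtain ⟨m, u, hu, hwu, hm⟩ := h
  exact not_avoid_length_power_implies_not_avoid_any_general
    (List.length_pos_iff.mpr hw).ne' hu hwu (dvd_mul_right _ m) hm N
end

section
/- Let N ≥ 3 and let σ be an abelian N-free morphism, i.e. a morphism such that σ(u) is abelian N-free whenever u is abelian N-free. If w is a nonempty word that avoids abelian N-powers cyclically, then σ(w) avoids abelian N-powers cyclically. -/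
/-- Application of a morphism given by its images on letters. -/
def applyMorphism {α β : Type*} (σ : α → List β) (w : List α) : List β :=
  (w.map σ).flatten

/-- A word is abelian N-free if it contains no abelian N-power as a factor. -/
def AbelianNFree {α : Type*} (N : ℕ) (u : List α) : Prop :=
  ¬ ∃ (m : ℕ) (v : List α), IsAbelianPower N m v ∧ v <:+: u

section Stream

variable {α : Type*} {s : Stream' α} {L : ℕ}

theorem stream_take_add (s : Stream' α) (m n : ℕ) :
    s.take (m + n) = s.take m ++ (s.drop m).take n := by
  induction m generalizing s with
  | zero => simp
  | succ m ih => rw [Nat.succ_add, Stream'.take_succ, ih, Stream'.take_succ, Stream'.drop_succ,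
      List.cons_append]

theorem stream_take_drop_isInfix_take (s : Stream' α) {x l n : ℕ} (h : x + l ≤ n) :
    (s.drop x).take l <:+: s.take n := by
  obtain ⟨r, rfl⟩ := Nat.exists_eq_add_of_le h
  rw [stream_take_add, stream_take_add]
  exact List.infix_append _ _ _

theorem exists_stream_take_drop_eq_of_isInfix_take {u : List α} {n : ℕ} (h : u <:+: s.take n) :
    ∃ x, (s.drop x).take u.length = u := by
  obtain ⟨p, t, h⟩ := h
  have hn : n = p.length + u.length + t.length := by
    simpa [Nat.add_assoc] using (congrArg List.length h).symm
  rw [hn, stream_take_add, stream_take_add] at h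
  have hpu := (List.append_inj h (by simp)).1
  exact ⟨p.length, (List.append_inj hpu (by simp)).2.symm⟩

theorem stream_take_mul_eq_flatten_ofFn (s : Stream' α) (N m : ℕ) :
    s.take (N * m) = (List.ofFn fun i : Fin N => (s.drop (i * m)).take m).flatten := by
  induction N with
  | zero => simp
  | succ N ih => rw [Nat.succ_mul, stream_take_add, ih, List.ofFn_succ_last]; simp

theorem stream_drop_mul_add (hs : s.drop L = s) (k x : ℕ) : s.drop (k * L + x) = s.drop x := by
  induction k with
  | zero => simp
  | succ k ih => rw [Nat.succ_mul, Nat.add_right_comm, Nat.add_comm, ← Stream'.drop_drop, hs, ih]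

theorem stream_take_drop_perm_take (hs : s.drop L = s) (x : ℕ) :
    ((s.drop x).take L).Perm (s.take L) := by
  rw [← List.perm_append_left_iff (s.take x)]
  calc s.take x ++ (s.drop x).take L
    _ = s.take (x + L) := (stream_take_add s x L).symm
    _ = s.take L ++ s.take x := by rw [Nat.add_comm, stream_take_add, hs]
    List.Perm _ (s.take x ++ s.take L) := List.perm_append_comm

theorem flatten_replicate_append_cycle (w : List α) (hw : w ≠ []) (k : ℕ) :
    (List.replicate k w).flatten ++ₛ Stream'.cycle w hw = Stream'.cycle w hw := by
  induction k with
  | zero => simp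
  | succ k ih => rw [List.replicate_succ, List.flatten_cons, Stream'.append_append_stream, ih,
      ← Stream'.cycle_eq]

theorem take_mul_length_cycle (w : List α) (hw : w ≠ []) (k : ℕ) :
    (Stream'.cycle w hw).take (k * w.length) = (List.replicate k w).flatten := by
  have hlen : k * w.length = (List.replicate k w).flatten.length := by simp
  rw [← flatten_replicate_append_cycle w hw k, hlen,
    Stream'.take_append_of_le_length (h := le_rfl), List.take_length]

theorem drop_length_cycle (w : List α) (hw : w ≠ []) :
    (Stream'.cycle w hw).drop w.length = Stream'.cycle w hw := by
  conv_lhs => rw [Stream'.cycle_eq]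
  exact Stream'.drop_append_stream w _

end Stream

section AbelianPower

variable {α : Type*} {s : Stream' α} {L N m x : ℕ}

theorem IsAbelianPower.length_eq_s13 {u : List α} (hu : IsAbelianPower N m u) : u.length = N * m := by
  obtain ⟨-, f, rfl, hlen, -⟩ := hu
  simp [List.length_flatten, List.map_ofFn, Function.comp_def, hlen]

theorem isAbelianPower_take_mul_iff :
    IsAbelianPower N m (s.take (N * m)) ↔
      0 < m ∧ ∀ i j : Fin N, ((s.drop (i * m)).take m).Perm ((s.drop (j * m)).take m) := by
  refine and_congr_right fun _ => ⟨?_, fun hperm =>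
    ⟨_, stream_take_mul_eq_flatten_ofFn s N m, fun i => Stream'.length_take _ _, hperm⟩⟩
  rintro ⟨f, hflat, hlen, hperm⟩
  have hf : f = fun i : Fin N => (s.drop (i * m)).take m := by
    refine List.ofFn_injective (List.eq_iff_flatten_eq.2 ⟨?_, ?_⟩)
    · rw [← hflat, stream_take_mul_eq_flatten_ofFn]
    · simp [List.map_ofFn, Function.comp_def, hlen]
  simpa only [hf] using hperm

theorem IsAbelianPower.complement (hs : s.drop L = s) (hm : m < L)
    (h : IsAbelianPower N m (s.take (N * m))) :
    IsAbelianPower N (L - m) ((s.drop (N * m)).take (N * (L - m))) := by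
  obtain ⟨-, hperm⟩ := isAbelianPower_take_mul_iff.1 h
  rw [isAbelianPower_take_mul_iff]
  have hcompl (i : Fin N) : ((s.drop (i.rev * m)).take m ++
      ((s.drop (N * m)).drop (i * (L - m))).take (L - m)).Perm (s.take L) := by
    obtain ⟨d, rfl⟩ := Nat.exists_eq_add_of_le hm.le
    have hpos : N * m + i * d = i * (m + d) + (i.rev * m + m) := by
      have hN : N = i + (i.rev + 1) := by rw [Fin.val_rev]; lia
      nth_rw 1 [hN]
      ring
    rw [Nat.add_sub_cancel_left, Stream'.drop_drop, hpos, stream_drop_mul_add hs,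
      ← Stream'.drop_drop, ← stream_take_add]
    exact stream_take_drop_perm_take hs _
  refine ⟨Nat.sub_pos_of_lt hm, fun i j => ?_⟩
  rw [← List.perm_append_left_iff ((s.drop (i.rev * m)).take m)]
  exact (hcompl i).trans ((hcompl j).symm.trans ((hperm _ _).append_right _))

theorem not_abelianNFree_take_of_isAbelianPower (h : IsAbelianPower N m ((s.drop x).take (N * m)))
    {n : ℕ} (hn : x + N * m ≤ n) : ¬ AbelianNFree N (s.take n) :=
  fun hfree => hfree ⟨m, _, h, stream_take_drop_isInfix_take s hn⟩

theorem not_abelianNFree_take_sub_one_mul (hN : 3 ≤ N) (hs : s.drop L = s) (hm : m < L)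
    (h : IsAbelianPower N m ((s.drop x).take (N * m))) :
    ¬ AbelianNFree N (s.take ((N - 1) * L)) := by
  wlog hx : x < L generalizing x
  · refine this (x := x % L) ?_ (Nat.mod_lt _ (by lia))
    rwa [← stream_drop_mul_add hs (x / L), Nat.div_add_mod']
  obtain hend | hend := le_total (x + N * m) ((N - 1) * L)
  · exact not_abelianNFree_take_of_isAbelianPower h hend
  obtain ⟨y, hy⟩ := Nat.exists_eq_add_of_le hend
  have hdrop : (s.drop x).drop L = s.drop x := by
    rw [Stream'.drop_drop, Nat.add_comm, ← Stream'.drop_drop, hs]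
  have hcompl := h.complement hdrop hm
  rw [Stream'.drop_drop, hy, stream_drop_mul_add hs] at hcompl
  refine not_abelianNFree_take_of_isAbelianPower hcompl ?_
  have hy_end : y + N * (L - m) = x + L := by
    zify [hm.le, (by lia : 1 ≤ N)] at hy ⊢
    linear_combination -hy
  calc y + N * (L - m)
    _ ≤ 2 * L := by lia
    _ ≤ (N - 1) * L := Nat.mul_le_mul_right L (by lia)

end AbelianPower

section CyclicAvoidance

variable {α : Type*} {N : ℕ} {w : List α}

theorem AvoidsAbelianCyc.abelianNFree_flatten_replicate (h : AvoidsAbelianCyc N w) {k : ℕ}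
    (hk : k < N) : AbelianNFree N (List.replicate k w).flatten := by
  rintro ⟨m, v, hv, hvk⟩
  have hwm : w.length ≤ m := h m v hv ⟨k, hvk⟩
  have hle : N * m ≤ k * w.length := by simpa [hv.length_eq_s13] using hvk.length_le
  have hlt : k * w.length < N * m :=
    (Nat.mul_le_mul_left k hwm).trans_lt (Nat.mul_lt_mul_of_pos_right hk hv.1)
  exact hlt.not_ge hle

theorem avoidsAbelianCyc_iff_abelianNFree_flatten_replicate (hN : 3 ≤ N) :
    AvoidsAbelianCyc N w ↔ AbelianNFree N (List.replicate (N - 1) w).flatten := by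
  refine ⟨fun h => h.abelianNFree_flatten_replicate (by lia), fun hfree m u hu ⟨k, hk⟩ => ?_⟩
  by_contra! hm
  have hw : w ≠ [] := List.ne_nil_of_length_pos (by lia)
  rw [← take_mul_length_cycle w hw] at hk hfree
  obtain ⟨x, hx⟩ := exists_stream_take_drop_eq_of_isInfix_take hk
  rw [hu.length_eq_s13] at hx
  rw [← hx] at hu
  exact not_abelianNFree_take_sub_one_mul hN (drop_length_cycle w hw) hm hu hfree

end CyclicAvoidance

theorem applyMorphism_flatten_replicate {α β : Type*} (σ : α → List β) (k : ℕ) (w : List α) :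
    applyMorphism σ (List.replicate k w).flatten =
      (List.replicate k (applyMorphism σ w)).flatten := by
  simp only [applyMorphism, List.map_flatten, List.map_replicate, List.flatten_flatten]

theorem abelian_free_morphism_preserves_cyclic_avoidance
    {α β : Type*} (N : ℕ) (hN : 3 ≤ N) (σ : α → List β)
    (hσ : ∀ u : List α, AbelianNFree N u → AbelianNFree N (applyMorphism σ u))
    (w : List α) (hw : w ≠ []) (havoid : AvoidsAbelianCyc N w) :
    AvoidsAbelianCyc N (applyMorphism σ w) := by
  rw [avoidsAbelianCyc_iff_abelianNFree_flatten_replicate hN] at havoid ⊢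
  rw [← applyMorphism_flatten_replicate]
  exact hσ _ havoid
end

section
/- Let σ₃ be the morphism on binary words defined by σ₃(0) = 0001 and σ₃(1) = 101, and let u be any factor of σ₃ⁿ(0) for some n ≥ 0 with |u| ≥ 29. Then u is light, i.e. the number of occurrences of the letter 0 in u is strictly greater than the number of occurrences of the letter 1 in u. -/
/-- Dekking-style morphism σ₃ : 0 ↦ 0001, 1 ↦ 101. -/
def sigma3 : Fin 2 → List (Fin 2) := fun a => if a = 0 then [0, 0, 0, 1] else [1, 0, 1]

/-!
Every factor of length at most 36 of a word `σ₃³(w)` is a factor of `σ₃³(ab)` for two letters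
`a`, `b`, because the images under `σ₃³` of single letters have length at least 35. Inspecting
these four words gives `Δ ≥ -3` for all factors of length at most 35, `Δ > 0` from length 29 on,
and `Δ ≥ 5` at length 35. Cutting a longer factor into blocks of length 35 and a remainder, the
blocks contribute at least 5 each and the remainder at least -3. Finally `σ₃ⁿ(0)` is a factor of
`σ₃³(σ₃ⁿ(0))`, as 0 occurs in `σ₃³(0)`.
-/

section Morphism

variable {α β : Type*}

theorem applyMorphism_cons (σ : α → List β) (a : α) (w : List α) :
    applyMorphism σ (a :: w) = σ a ++ applyMorphism σ w := by
  simp [applyMorphism]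

theorem applyMorphism_singleton (σ : α → List β) (a : α) : applyMorphism σ [a] = σ a := by
  simp [applyMorphism]

theorem applyMorphism_prefix (σ : α → List β) {v w : List α} (h : v <+: w) :
    applyMorphism σ v <+: applyMorphism σ w :=
  (h.map σ).flatten

theorem applyMorphism_infix (σ : α → List β) {v w : List α} (h : v <:+: w) :
    applyMorphism σ v <:+: applyMorphism σ w :=
  (h.map σ).flatten

theorem iterate_applyMorphism_infix (σ : α → List α) (n : ℕ) {v w : List α} (h : v <:+: w) :
    (applyMorphism σ)^[n] v <:+: (applyMorphism σ)^[n] w := by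
  induction n generalizing v w with
  | zero => exact h
  | succ _ ih => exact ih (applyMorphism_infix σ h)

theorem iterate_applyMorphism_eq_applyMorphism (σ : α → List α) (n : ℕ) (w : List α) :
    (applyMorphism σ)^[n] w = applyMorphism (fun a => (applyMorphism σ)^[n] [a]) w := by
  induction n with
  | zero => simp [applyMorphism, ← List.flatMap_def]
  | succ n ih =>
    simp only [Function.iterate_succ_apply', ih]
    simp [applyMorphism, ← List.flatMap_def, List.flatMap_assoc]

variable {σ : α → List β} {c : ℕ}

theorem mul_length_le_length_applyMorphism (hσ : ∀ a, c ≤ (σ a).length) (w : List α) :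
    c * w.length ≤ (applyMorphism σ w).length := by
  induction w with
  | nil => simp
  | cons a w ih =>
    rw [applyMorphism_cons, List.length_append, List.length_cons, mul_add_one, add_comm]
    exact add_le_add (hσ a) ih

theorem prefix_applyMorphism_take (hσ : ∀ a, c ≤ (σ a).length) {k : ℕ} {u : List β}
    {w : List α} (hu : u <+: applyMorphism σ w) (hk : u.length ≤ c * k) :
    u <+: applyMorphism σ (w.take k) := by
  rcases le_total w.length k with hw | hw
  · rwa [List.take_of_length_le hw]
  · refine List.prefix_of_prefix_length_le hu
      (applyMorphism_prefix σ (List.take_prefix k w)) (hk.trans ?_)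
    simpa [List.length_take_of_le hw] using mul_length_le_length_applyMorphism hσ (w.take k)

theorem exists_infix_length_le_of_infix_applyMorphism (hσ : ∀ a, c ≤ (σ a).length) {k : ℕ}
    {u : List β} {w : List α} (hu : u <:+: applyMorphism σ w) (hk : u.length ≤ c * k + 1) :
    ∃ y, y <:+: w ∧ y.length ≤ k + 1 ∧ u <:+: applyMorphism σ y := by
  induction w with
  | nil => exact ⟨[], List.infix_rfl, by simp, hu⟩
  | cons a w ih =>
    rw [applyMorphism_cons, List.infix_append_iff_ne_nil] at hu
    rcases hu with hu | hu | ⟨s, p, hs, -, rfl, hsuffix, hprefix⟩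
    · exact ⟨[a], (List.prefix_append [a] w).isInfix, by simp, by rwa [applyMorphism_singleton]⟩
    · obtain ⟨y, hyw, hy, huy⟩ := ih hu
      exact ⟨y, List.infix_cons hyw, hy, huy⟩
    · have hp : p.length ≤ c * k := by
        have := List.length_pos_iff.mpr hs
        rw [List.length_append] at hk
        omega
      obtain ⟨x, hx⟩ := hsuffix
      obtain ⟨z, hz⟩ := prefix_applyMorphism_take hσ hprefix hp
      refine ⟨a :: w.take k, ?_, by simp, x, z, ?_⟩
      · exact (List.cons_prefix_cons.mpr ⟨rfl, List.take_prefix k w⟩).isInfix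
      · rw [applyMorphism_cons, ← hx, ← hz]
        simp only [List.append_assoc]

theorem exists_pair_infix_applyMorphism [Nonempty α] (hσ : ∀ a, c ≤ (σ a).length)
    {u : List β} {w : List α} (hu : u <:+: applyMorphism σ w) (hc : u.length ≤ c + 1) :
    ∃ a b, u <:+: applyMorphism σ [a, b] := by
  obtain ⟨y, -, hy, huy⟩ := exists_infix_length_le_of_infix_applyMorphism (k := 1) hσ hu (by omega)
  obtain ⟨a, b, hab⟩ : ∃ a b, y <:+: [a, b] := by
    let d := Classical.arbitrary α
    match y, hy with
    | [], _ => exact ⟨d, d, List.nil_infix⟩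
    | [a], _ => exact ⟨a, d, (List.prefix_append [a] [d]).isInfix⟩
    | [a, b], _ => exact ⟨a, b, List.infix_rfl⟩
  exact ⟨a, b, huy.trans (applyMorphism_infix σ hab)⟩

end Morphism

theorem forall_infix_of_forall_tails_inits {α : Type*} {p : List α → Prop} {m : ℕ} {w : List α}
    (h : ∀ t ∈ w.tails, ∀ u ∈ (t.take m).inits, p u) {u : List α} (hu : u <:+: w)
    (hm : u.length ≤ m) : p u := by
  obtain ⟨t, hut, htw⟩ := List.infix_iff_prefix_suffix.mp hu
  exact h t ((List.mem_tails t w).mpr htw) u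
    ((List.mem_inits u _).mpr (List.prefix_take_iff.mpr ⟨hut, hm⟩))

theorem add_le_of_infix_of_blocks {α M : Type*} [AddCommMonoid M] [PartialOrder M]
    [IsOrderedAddMonoid M] {f : List α → M} (hf : ∀ u v, f (u ++ v) = f u + f v) {w : List α}
    {N : ℕ} {a b : M} (hN : 0 < N) (hb : 0 ≤ b)
    (hblock : ∀ v, v <:+: w → v.length = N → b ≤ f v)
    (hshort : ∀ v, v <:+: w → v.length < N → a ≤ f v)
    {u : List α} (hu : u <:+: w) (hlen : N ≤ u.length) : b + a ≤ f u := by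
  induction hl : u.length using Nat.strong_induction_on generalizing u with
  | _ l ih =>
    have htake : b ≤ f (u.take N) :=
      hblock _ ((List.take_prefix N u).isInfix.trans hu) (List.length_take_of_le hlen)
    have hdrop : a ≤ f (u.drop N) := by
      have hinfix : u.drop N <:+: w := (List.drop_suffix N u).isInfix.trans hu
      rcases lt_or_ge (u.drop N).length N with hlt | hge
      · exact hshort _ hinfix hlt
      · have hlt : (u.drop N).length < l := by rw [List.length_drop]; omega
        exact (le_add_of_nonneg_left hb).trans (ih _ hlt hinfix hge rfl)
    calc
      b + a ≤ f (u.take N) + f (u.drop N) := add_le_add htake hdrop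
      _ = f u := by rw [← hf, List.take_append_drop]

/-- The quantity `Δ(u) = |u|₀ - |u|₁`; a word is light when it is positive. -/
def zeroExcess (u : List (Fin 2)) : ℤ := u.count 0 - u.count 1

theorem zeroExcess_pos_iff {u : List (Fin 2)} : 0 < zeroExcess u ↔ u.count 1 < u.count 0 := by
  simp [zeroExcess]

theorem zeroExcess_append (u v : List (Fin 2)) :
    zeroExcess (u ++ v) = zeroExcess u + zeroExcess v := by
  simp only [zeroExcess, List.count_append]
  push_cast
  ring

/-- The bounds on `Δ` shared by all factors of length at most 35 of a word `σ₃³(w)`. The gain 5 of a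
block of length 35 exceeds the worst loss 3 of a factor, so lightness survives concatenation. -/
def ZeroExcessBounds (u : List (Fin 2)) : Prop :=
  -3 ≤ zeroExcess u ∧ (29 ≤ u.length → 0 < zeroExcess u) ∧ (u.length = 35 → 5 ≤ zeroExcess u)

instance : DecidablePred ZeroExcessBounds := fun _ => inferInstanceAs (Decidable (_ ∧ _ ∧ _))

theorem le_length_iterate_sigma3_singleton :
    ∀ a, 35 ≤ ((applyMorphism sigma3)^[3] [a]).length := by
  decide +kernel

theorem zeroExcessBounds_pair : ∀ a b, ∀ t ∈ ((applyMorphism sigma3)^[3] [a, b]).tails,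
    ∀ u ∈ (t.take 35).inits, ZeroExcessBounds u := by
  decide +kernel

theorem zeroExcessBounds_of_infix {u w : List (Fin 2)}
    (hu : u <:+: (applyMorphism sigma3)^[3] w) (hlen : u.length ≤ 35) : ZeroExcessBounds u := by
  rw [iterate_applyMorphism_eq_applyMorphism] at hu
  obtain ⟨a, b, hab⟩ :=
    exists_pair_infix_applyMorphism le_length_iterate_sigma3_singleton hu (by omega)
  rw [← iterate_applyMorphism_eq_applyMorphism] at hab
  exact forall_infix_of_forall_tails_inits (zeroExcessBounds_pair a b) hab hlen

theorem long_factors_of_sigma3_are_light_general {u w : List (Fin 2)}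
    (hu : u <:+: (applyMorphism sigma3)^[3] w) (hlen : 29 ≤ u.length) :
    u.count 1 < u.count 0 := by
  rw [← zeroExcess_pos_iff]
  rcases lt_or_ge u.length 35 with hlt | hge
  · exact (zeroExcessBounds_of_infix hu hlt.le).2.1 hlen
  · have : 5 + -3 ≤ zeroExcess u :=
      add_le_of_infix_of_blocks zeroExcess_append (by norm_num) (by norm_num)
        (fun v hv heq => (zeroExcessBounds_of_infix hv heq.le).2.2 heq)
        (fun v hv hlt => (zeroExcessBounds_of_infix hv hlt.le).1) hu hge
    omega

theorem singleton_zero_infix_iterate_sigma3 : [0] <:+: (applyMorphism sigma3)^[3] [0] :=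
  (List.singleton_infix_iff _ _).mpr (by decide +kernel)

theorem long_factors_of_sigma3_are_light :
    ∀ (n : ℕ) (u : List (Fin 2)),
      u <:+: (applyMorphism sigma3)^[n] [(0 : Fin 2)] → 29 ≤ u.length →
      u.count 1 < u.count 0 := by
  intro n u hu hlen
  refine long_factors_of_sigma3_are_light_general (w := (applyMorphism sigma3)^[n] [0]) ?_ hlen
  rw [← Function.iterate_add_apply, add_comm, Function.iterate_add_apply]
  exact hu.trans (iterate_applyMorphism_infix sigma3 n singleton_zero_infix_iterate_sigma3)
end
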